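/- arXiv:0903.1532 — 2 statements merged into one kernel-verified Lean document; each statement's English description precedes it below -/
import Mathlib

section
/- Let p ≥ 2 be an integer and let ω_1, …, ω_p be positive integers with s = ω_1 + ⋯ + ω_p ≤ N. The number of functions f ∈ F_N whose global orbit pattern is [ω_1, …, ω_p] equals (N−1)! · N^{N−s} / ((N−s)! · Π_{k=2}^{p} (ω_k + ω_{k+1} + ⋯ + ω_p)). -/
open scoped Classical

/-- Two points are in the same component of `X_N` under `f`:
`x ~ y` iff some forward iterate of `x` equals some forward iterate of `y`. -/
def sameComp {N : ℕ} (f : Fin N → Fin N) (x y : Fin N) : Prop :=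
  ∃ k l : ℕ, f^[k] x = f^[l] y

/-- The order `ω(x, f)` of a point `x`: the length of the periodic cycle contained in
the component of `x`, i.e. the least `p > 0` such that the orbit of `x` is eventually
`p`-periodic. -/
noncomputable def gopOrd {N : ℕ} (f : Fin N → Fin N) (x : Fin N) : ℕ :=
  sInf {p : ℕ | 0 < p ∧ ∃ K : ℕ, f^[K + p] x = f^[K] x}

/-- The global orbit pattern of `f`: the list of orders of the least elements of the
components of `X_N` under `f`, listed in increasing order of those least elements. -/
noncomputable def gop {N : ℕ} (f : Fin N → Fin N) : List ℕ :=
  ((Finset.univ.filter (fun x : Fin N => ∀ y : Fin N, sameComp f x y → x ≤ y)).sort (· ≤ ·)).map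
    (gopOrd f)

/-!
Every self-map `f` of a finite set `X` factors uniquely as `f = h ∘ σ`, where `σ` is a permutation
supported on the set `S` of periodic points of `f`, and `h` is a rooted forest with set of roots
`S`. Two points lie in the same component of `f` iff their roots lie in the same cycle of `σ`, so
the global orbit pattern lists the cycle lengths of `σ`, a cycle coming before another if the least
point of `X` whose root it contains is smaller.

For a fixed forest, the number of permutations `σ` with pattern `L = [ω_1, …, ω_p]` depends only on
`n = #S`: if `ω_1 + ⋯ + ω_p = n`, it is `n!` divided by the product of the suffix sums of `L`.
Indeed, the first cycle is the one through the root `z` of the least point of `X`. If `z` is fixed,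
deleting it leaves the pattern `[ω_2, …, ω_p]`. Otherwise, deleting the successor `y = σ z`, which
may be any of the `n - 1` other roots, leaves the pattern `[ω_1 - 1, ω_2, …, ω_p]`.

It remains to multiply by the number `n * N ^ (N - n - 1)` of forests with `n` given roots among
`N = #X` points, and by the number of sets `S` with `n` elements. The forests are counted by
cutting the edge leaving a point `z ∉ S`: given a forest on `insert z S`, the edge can be restored
to end at any point of the trees rooted in `S`, which on average make up a fraction
`n / (n + 1)` of the points.
-/

open Finset Function

section Iterate

variable {α : Type*}

lemma exists_iterate_mem_of_eqOn_compl {f g : α → α} {C : Set α} (hfg : Set.EqOn f g Cᶜ) {x : α}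
    {k : ℕ} (hk : f^[k] x ∈ C) : ∃ j, f^[j] x ∈ C ∧ g^[j] x = f^[j] x := by
  induction k generalizing x with
  | zero => exact ⟨0, hk, rfl⟩
  | succ k ih =>
    by_cases hx : x ∈ C
    · exact ⟨0, hx, rfl⟩
    · obtain ⟨j, hj, hgj⟩ := ih hk
      exact ⟨j + 1, hj, by rw [iterate_succ_apply, ← hfg hx, hgj, iterate_succ_apply]⟩

lemma iterate_update_of_forall_ne [DecidableEq α] {f : α → α} {x z : α}
    (hx : ∀ k, f^[k] x ≠ z) (y : α) (k : ℕ) : (update f z y)^[k] x = f^[k] x := by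
  induction k with
  | zero => rfl
  | succ k ih => rw [iterate_succ_apply', ih, update_of_ne (hx k), iterate_succ_apply']

lemma exists_iterate_mem_periodicPts [Finite α] (f : α → α) (x : α) :
    ∃ k, f^[k] x ∈ periodicPts f := by
  obtain ⟨k, l, hkl, h⟩ : ∃ k l, k < l ∧ f^[k] x = f^[l] x := by
    obtain ⟨k, l, hne, h⟩ := Finite.exists_ne_map_eq_of_infinite fun k : ℕ => f^[k] x
    rcases hne.lt_or_gt with hkl | hlk
    exacts [⟨k, l, hkl, h⟩, ⟨l, k, hlk, h.symm⟩]
  refine ⟨k, mk_mem_periodicPts (Nat.sub_pos_of_lt hkl) ?_⟩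
  rw [IsPeriodicPt, IsFixedPt, ← iterate_add_apply, Nat.sub_add_cancel hkl.le, h]

lemma iterate_conj (e : Equiv.Perm α) (f : α → α) (k : ℕ) :
    (e ∘ f ∘ e.symm)^[k] = e ∘ f^[k] ∘ e.symm := by
  have hsemi : Semiconj e f (e ∘ f ∘ e.symm) := fun x => by simp
  ext x
  simpa using (hsemi.iterate_right k (e.symm x)).symm

end Iterate

section Forest

variable {α : Type*}

/-- `h` is a rooted forest with set of roots `S`, encoded by its parent map: the roots are their
own parents, and every point has an ancestor in `S`. -/
structure IsForest (S : Finset α) (h : α → α) : Prop where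
  isFixedPt : ∀ x ∈ S, IsFixedPt h x
  exists_iterate_mem : ∀ x, ∃ k, h^[k] x ∈ S

namespace IsForest

variable {S : Finset α} {h : α → α}

lemma mem_of_mem_periodicPts (hh : IsForest S h) {x : α} (hx : x ∈ periodicPts h) : x ∈ S := by
  obtain ⟨k, hk⟩ := hh.exists_iterate_mem x
  have hfix : IsFixedPt h x := isPeriodicPt_of_mem_periodicPts_of_isPeriodicPt_iterate hx
    (m := 1) (n := k) (hh.isFixedPt _ hk)
  rwa [(hfix.iterate k).eq] at hk

lemma iterate_eq_iterate (hh : IsForest S h) {x : α} {k l : ℕ} (hk : h^[k] x ∈ S)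
    (hl : h^[l] x ∈ S) : h^[k] x = h^[l] x :=
  calc h^[k] x = h^[l] (h^[k] x) := ((hh.isFixedPt _ hk).iterate l).eq.symm
    _ = h^[k] (h^[l] x) := (Function.Commute.refl h).iterate_iterate l k x
    _ = h^[l] x := ((hh.isFixedPt _ hl).iterate k).eq

/-- The root of the tree of the forest `h` containing `x`. -/
noncomputable def root (hh : IsForest S h) (x : α) : α :=
  h^[(hh.exists_iterate_mem x).choose] x

lemma root_mem (hh : IsForest S h) (x : α) : hh.root x ∈ S :=
  (hh.exists_iterate_mem x).choose_spec

lemma root_eq_self (hh : IsForest S h) {x : α} (hx : x ∈ S) : hh.root x = x :=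
  ((hh.isFixedPt x hx).iterate _).eq

lemma conj (hh : IsForest S h) {e : Equiv.Perm α} (he : ∀ x ∈ S, e x ∈ S)
    (he' : ∀ x ∈ S, e.symm x ∈ S) : IsForest S (e ∘ h ∘ e.symm) where
  isFixedPt x hx := by
    rw [IsFixedPt, comp_apply, comp_apply, (hh.isFixedPt _ (he' x hx)).eq, e.apply_symm_apply]
  exists_iterate_mem x := by
    obtain ⟨k, hk⟩ := hh.exists_iterate_mem (e.symm x)
    exact ⟨k, by simpa only [iterate_conj, comp_apply] using he _ hk⟩

variable [DecidableEq α] {y z : α}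

lemma update_self (hh : IsForest S h) : IsForest (insert z S) (update h z z) where
  isFixedPt x hx := by
    obtain rfl | hxz := eq_or_ne x z
    · exact update_self ..
    · exact (update_of_ne hxz ..).trans (hh.isFixedPt x (mem_of_mem_insert_of_ne hx hxz))
  exists_iterate_mem x := by
    obtain ⟨k, hk⟩ := hh.exists_iterate_mem x
    obtain ⟨j, hj, hgj⟩ := exists_iterate_mem_of_eqOn_compl (g := update h z z)
      (C := (insert z S : Finset α)) (fun x hx => (update_of_ne (by grind) ..).symm)
      (mem_insert_of_mem hk)
    exact ⟨j, hgj ▸ hj⟩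

lemma exists_iterate_update_apply_mem (hh : IsForest S h) (hz : z ∉ S) :
    ∃ k, (update h z z)^[k] (h z) ∈ S := by
  have hne (k : ℕ) : h^[k] (h z) ≠ z := fun hk =>
    hz (hh.mem_of_mem_periodicPts (mk_mem_periodicPts k.succ_pos hk))
  obtain ⟨k, hk⟩ := hh.exists_iterate_mem (h z)
  exact ⟨k, by rwa [iterate_update_of_forall_ne hne]⟩

lemma update_of_iterate_mem (hh : IsForest (insert z S) h) (hz : z ∉ S) {k : ℕ}
    (hy : h^[k] y ∈ S) : IsForest S (update h z y) where
  isFixedPt x hx := (update_of_ne (by grind) ..).trans (hh.isFixedPt x (mem_insert_of_mem hx))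
  exists_iterate_mem x := by
    have hne (j : ℕ) : h^[j] y ≠ z := by
      rintro rfl
      exact hz (hh.iterate_eq_iterate (mem_insert_of_mem hy) (mem_insert_self _ S) ▸ hy)
    obtain ⟨m, hm⟩ := hh.exists_iterate_mem x
    obtain ⟨j, hj, hgj⟩ := exists_iterate_mem_of_eqOn_compl (g := update h z y)
      (C := (insert z S : Finset α)) (fun x hx => (update_of_ne (by grind) ..).symm) hm
    rcases mem_insert.1 hj with hjz | hjS
    · refine ⟨k + (1 + j), ?_⟩
      rwa [iterate_add_apply, iterate_add_apply, hgj, hjz, iterate_one, Function.update_self,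
        iterate_update_of_forall_ne hne]
    · exact ⟨j, hgj ▸ hjS⟩

end IsForest

section Count

variable [Fintype α] {S : Finset α} {h : α → α}

/-- The points with an iterate under `h` in `A`: if `h` is a forest and `A` consists of roots, the
union of the trees rooted in `A`. -/
noncomputable def basin (h : α → α) (A : Finset α) : Finset α :=
  univ.filter fun x => ∃ k, h^[k] x ∈ A

lemma mem_basin {A : Finset α} {x : α} : x ∈ basin h A ↔ ∃ k, h^[k] x ∈ A := by simp [basin]

lemma IsForest.basin_eq_univ (hh : IsForest S h) : basin h S = univ :=
  eq_univ_of_forall fun x => mem_basin.2 (hh.exists_iterate_mem x)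

lemma IsForest.card_basin (hh : IsForest S h) {A : Finset α} (hA : A ⊆ S) :
    #(basin h A) = ∑ a ∈ A, #(basin h {a}) := by
  have hunion : basin h A = A.biUnion fun a => basin h {a} := by
    ext x
    simp only [mem_basin, mem_biUnion, mem_singleton]
    exact ⟨fun ⟨k, hk⟩ => ⟨_, hk, k, rfl⟩, fun ⟨_, ha, k, hk⟩ => ⟨k, hk ▸ ha⟩⟩
  rw [hunion, card_biUnion]
  intro a ha b hb hab
  simp only [disjoint_left, mem_basin, mem_singleton]
  rintro x ⟨k, rfl⟩ ⟨l, rfl⟩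
  exact hab (hh.iterate_eq_iterate (hA ha) (hA hb))

lemma card_basin_conj (e : Equiv.Perm α) (h : α → α) (a : α) :
    #(basin (e ∘ h ∘ e.symm) {e a}) = #(basin h {a}) := by
  rw [← card_map (s := basin h {a}) e.toEmbedding]
  congr 1
  ext x
  simp only [mem_basin, mem_map_equiv, iterate_conj, comp_apply, mem_singleton,
    EmbeddingLike.apply_eq_iff_eq]

variable [DecidableEq α] {a b z : α}

/-- The forests with set of roots `S`. -/
noncomputable def forests (S : Finset α) : Finset (α → α) :=
  univ.filter (IsForest S)

lemma mem_forests : h ∈ forests S ↔ IsForest S h := by simp [forests]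

lemma forests_univ : forests (univ : Finset α) = {id} := by
  ext h
  rw [mem_forests, mem_singleton]
  refine ⟨fun hh => funext fun x => hh.isFixedPt x (mem_univ x), ?_⟩
  rintro rfl
  exact ⟨fun x _ => rfl, fun x => ⟨0, mem_univ x⟩⟩

-- A forest on `S` amounts to the forest on `insert z S` obtained by cutting the edge leaving `z`,
-- together with the other end of that edge, which may not lie in the tree cut off.
lemma card_forests_eq_sum_card_basin (hz : z ∉ S) :
    #(forests S) = ∑ h ∈ forests (insert z S), #(basin h S) := by
  rw [← card_sigma]
  refine card_nbij' (fun h => ⟨update h z z, h z⟩) (fun p => update p.1 z p.2) ?_ ?_ ?_ ?_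
  · intro h hh
    rw [mem_coe, mem_forests] at hh
    exact mem_sigma.2 ⟨mem_forests.2 hh.update_self,
      mem_basin.2 (hh.exists_iterate_update_apply_mem hz)⟩
  · rintro ⟨h, y⟩ hp
    obtain ⟨hh, hy⟩ := mem_sigma.1 hp
    obtain ⟨k, hk⟩ := mem_basin.1 hy
    exact mem_forests.2 ((mem_forests.1 hh).update_of_iterate_mem hz hk)
  · intro h _
    simp only [update_idem, update_eq_self]
  · rintro ⟨h, y⟩ hp
    have hhz : update h z z = h :=
      update_eq_self_iff.2
        ((mem_forests.1 (mem_sigma.1 hp).1).isFixedPt z (mem_insert_self z S)).eq.symm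
    simp only [update_idem, Function.update_self, hhz]

lemma sum_card_basin_singleton (ha : a ∈ S) (hb : b ∈ S) :
    ∑ h ∈ forests S, #(basin h {a}) = ∑ h ∈ forests S, #(basin h {b}) := by
  have hmem : ∀ x ∈ S, Equiv.swap a b x ∈ S := fun x hx => by
    rw [Equiv.swap_apply_def]; split_ifs <;> assumption
  have hconj : ∀ h ∈ forests S, Equiv.swap a b ∘ h ∘ Equiv.swap a b ∈ forests S := fun h hh =>
    mem_forests.2 ((mem_forests.1 hh).conj hmem hmem)
  have hinv (h : α → α) :
      Equiv.swap a b ∘ (Equiv.swap a b ∘ h ∘ Equiv.swap a b) ∘ Equiv.swap a b = h := by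
    ext x; simp
  refine sum_nbij' _ _ hconj hconj (fun h _ => hinv h) (fun h _ => hinv h) fun h _ => ?_
  simpa only [Equiv.swap_apply_left, Equiv.symm_swap] using
    (card_basin_conj (Equiv.swap a b) h a).symm

lemma card_forests_mul_card_insert (hz : z ∉ S) :
    #(forests S) * #(insert z S) = #S * Fintype.card α * #(forests (insert z S)) := by
  set c := ∑ h ∈ forests (insert z S), #(basin h {z})
  have hsum {A : Finset α} (hA : A ⊆ insert z S) :
      ∑ h ∈ forests (insert z S), #(basin h A) = #A * c := by
    rw [sum_congr rfl fun h hh => (mem_forests.1 hh).card_basin hA, sum_comm,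
      sum_congr rfl fun a ha => sum_card_basin_singleton (hA ha) (mem_insert_self z S),
      sum_const, smul_eq_mul]
  have htotal : #(forests (insert z S)) * Fintype.card α = #(insert z S) * c := by
    rw [← hsum subset_rfl, sum_congr rfl fun h hh => by rw [(mem_forests.1 hh).basin_eq_univ],
      sum_const, smul_eq_mul, card_univ]
  rw [card_forests_eq_sum_card_basin hz, hsum (subset_insert z S), mul_assoc, mul_comm c,
    ← htotal]
  ring

/-- **Cayley's formula** for forests with prescribed roots, `#S * N ^ (N - #S - 1)`, multiplied
by `N` so that it also holds for `S = univ`. -/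
theorem card_forests_mul_card (S : Finset α) :
    #(forests S) * Fintype.card α = #S * Fintype.card α ^ #Sᶜ := by
  induction hn : #Sᶜ generalizing S with
  | zero =>
    obtain rfl : S = univ := by rwa [card_eq_zero, compl_eq_empty_iff] at hn
    simp only [forests_univ, card_singleton, card_univ, pow_zero, one_mul, mul_one]
  | succ n ih =>
    obtain ⟨z, hz⟩ : Sᶜ.Nonempty := card_pos.1 (by lia)
    rw [mem_compl] at hz
    have hIH := ih (insert z S) (by rw [compl_insert, card_erase_of_mem (by simpa), hn]; rfl)
    refine Nat.eq_of_mul_eq_mul_right (card_pos.2 (insert_nonempty z S)) ?_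
    calc #(forests S) * Fintype.card α * #(insert z S)
        = #S * Fintype.card α * (#(forests (insert z S)) * Fintype.card α) := by
          rw [mul_right_comm, card_forests_mul_card_insert hz, mul_assoc]
      _ = #S * Fintype.card α ^ (n + 1) * #(insert z S) := by rw [hIH]; ring

end Count

end Forest

section Decomposition

variable {α : Type*} [DecidableEq α] {S : Finset α} {h : α → α} {σ : Equiv.Perm α}

lemma apply_mem_iff_of_mem_permsOfFinset (hσ : σ ∈ permsOfFinset S) {x : α} :
    σ x ∈ S ↔ x ∈ S := by
  rw [mem_perms_of_finset_iff] at hσ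
  by_cases hx : σ x = x
  · rw [hx]
  · exact iff_of_true (hσ (σ.injective.ne hx)) (hσ hx)

lemma apply_eq_self_of_mem_permsOfFinset (hσ : σ ∈ permsOfFinset S) {x : α} (hx : x ∉ S) :
    σ x = x :=
  not_not.1 fun hne => hx (mem_perms_of_finset_iff.1 hσ hne)

namespace IsForest

lemma comp_perm_apply (hh : IsForest S h) (hσ : σ ∈ permsOfFinset S) {x : α} (hx : x ∈ S) :
    (h ∘ σ) x = σ x :=
  hh.isFixedPt _ ((apply_mem_iff_of_mem_permsOfFinset hσ).2 hx)

lemma mapsTo_comp_perm (hh : IsForest S h) (hσ : σ ∈ permsOfFinset S) :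
    Set.MapsTo (h ∘ σ) S S := fun x hx => by
  rw [mem_coe] at hx ⊢
  rwa [hh.comp_perm_apply hσ hx, apply_mem_iff_of_mem_permsOfFinset hσ]

lemma iterate_comp_perm (hh : IsForest S h) (hσ : σ ∈ permsOfFinset S) {x : α} (hx : x ∈ S)
    (k : ℕ) : (h ∘ σ)^[k] x = (σ ^ k) x := by
  rw [Equiv.Perm.coe_pow]
  induction k with
  | zero => rfl
  | succ k ih =>
    rw [iterate_succ_apply', iterate_succ_apply', ← ih,
      hh.comp_perm_apply hσ ((hh.mapsTo_comp_perm hσ).iterate k hx)]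

lemma exists_iterate_comp_perm_eq_root (hh : IsForest S h) (hσ : σ ∈ permsOfFinset S) (x : α) :
    ∃ k, (h ∘ σ)^[k] x = hh.root x := by
  obtain ⟨k, hk, hfk⟩ := exists_iterate_mem_of_eqOn_compl (g := h ∘ σ) (C := (S : Set α))
    (fun y hy => by rw [comp_apply, apply_eq_self_of_mem_permsOfFinset hσ hy]) (hh.root_mem x)
  exact ⟨k, hfk.trans (hh.iterate_eq_iterate hk (hh.root_mem x))⟩

lemma periodicPts_comp_perm [Finite α] (hh : IsForest S h) (hσ : σ ∈ permsOfFinset S) :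
    periodicPts (h ∘ σ) = S := by
  refine Set.Subset.antisymm (fun x hx => ?_) fun x hx => ?_
  · obtain ⟨k, hk⟩ := hh.exists_iterate_comp_perm_eq_root hσ x
    have hmem : (h ∘ σ)^[k] x ∈ S := hk ▸ hh.root_mem x
    obtain ⟨n, hn, hper⟩ := hx
    have hcycle := ((hh.mapsTo_comp_perm hσ).iterate (k * n - k)) hmem
    rwa [← iterate_add_apply, Nat.sub_add_cancel (Nat.le_mul_of_pos_right k hn),
      (hper.const_mul k).eq] at hcycle
  · obtain ⟨n, hn, hper⟩ := σ.injective.mem_periodicPts x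
    refine mk_mem_periodicPts hn ?_
    rw [IsPeriodicPt, IsFixedPt, hh.iterate_comp_perm hσ hx, Equiv.Perm.coe_pow, hper.eq]

lemma perm_eq_of_comp_eq {h' : α → α} {σ' : Equiv.Perm α} (hh : IsForest S h)
    (hσ : σ ∈ permsOfFinset S) (hh' : IsForest S h') (hσ' : σ' ∈ permsOfFinset S)
    (heq : h ∘ σ = h' ∘ σ') : σ = σ' := by
  ext x
  by_cases hx : x ∈ S
  · rw [← hh.comp_perm_apply hσ hx, heq, hh'.comp_perm_apply hσ' hx]
  · rw [apply_eq_self_of_mem_permsOfFinset hσ hx, apply_eq_self_of_mem_permsOfFinset hσ' hx]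

end IsForest

lemma exists_isForest_comp_perm_eq [Finite α] (f : α → α) :
    ∃ S h σ, IsForest S h ∧ σ ∈ permsOfFinset S ∧ h ∘ σ = f := by
  set S := (periodicPts f).toFinite.toFinset
  have hmem {x : α} : x ∈ S ↔ x ∈ periodicPts f := Set.Finite.mem_toFinset _
  set σ : Equiv.Perm α := Equiv.Perm.ofSubtype ((bijOn_periodicPts f).equiv f) with hσ
  have hσS {x : α} (hx : x ∈ periodicPts f) : σ x = f x := by
    rw [hσ, Equiv.Perm.ofSubtype_apply_of_mem _ hx]; rfl
  have hσS' {x : α} (hx : x ∉ periodicPts f) : σ x = x :=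
    Equiv.Perm.ofSubtype_apply_of_not_mem _ hx
  have hfix : ∀ x ∈ S, IsFixedPt (S.piecewise id f) x := fun x hx => S.piecewise_eq_of_mem _ _ hx
  refine ⟨S, S.piecewise id f, σ, ⟨hfix, fun x => ?_⟩, ?_, funext fun x => ?_⟩
  · obtain ⟨k, hk⟩ := exists_iterate_mem_periodicPts f x
    obtain ⟨j, hj, hfj⟩ := exists_iterate_mem_of_eqOn_compl (g := S.piecewise id f)
      (fun y hy => (S.piecewise_eq_of_notMem _ _ (mt hmem.1 hy)).symm) hk
    exact ⟨j, by rwa [hfj, hmem]⟩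
  · exact mem_perms_of_finset_iff.2 fun hne => hmem.2 (not_imp_comm.1 hσS' hne)
  · by_cases hx : x ∈ periodicPts f
    · rw [comp_apply, hσS hx, (hfix _ (hmem.2 ((bijOn_periodicPts f).mapsTo hx))).eq]
    · rw [comp_apply, hσS' hx, S.piecewise_eq_of_notMem _ _ (mt hmem.1 hx)]

lemma card_filter_eq_sum_forests [Fintype α] (P : (α → α) → Prop) [DecidablePred P] :
    #{f | P f} = ∑ S, ∑ h ∈ forests S,
      #((permsOfFinset S).filter fun σ : Equiv.Perm α => P (h ∘ σ)) := by
  simp_rw [← card_sigma]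
  symm
  refine card_nbij (fun p => p.2.1 ∘ p.2.2) ?_ ?_ ?_
  · rintro ⟨S, h, σ⟩ hp
    simp only [coe_sigma, Set.mem_sigma_iff, mem_coe, mem_filter] at hp
    simpa only [mem_coe, mem_filter_univ] using hp.2.2.2
  · rintro ⟨S, h, σ⟩ hp ⟨S', h', σ'⟩ hp' heq
    simp only [coe_sigma, Set.mem_sigma_iff, mem_coe, mem_filter, mem_forests] at hp hp' heq
    obtain ⟨-, hh, hσ, -⟩ := hp
    obtain ⟨-, hh', hσ', -⟩ := hp'
    obtain rfl : S = S' := by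
      rw [← coe_inj, ← hh.periodicPts_comp_perm hσ, heq, hh'.periodicPts_comp_perm hσ']
    obtain rfl := hh.perm_eq_of_comp_eq hσ hh' hσ' heq
    obtain rfl : h = h' := σ.surjective.injective_comp_right heq
    rfl
  · intro f hf
    obtain ⟨S, h, σ, hh, hσ, rfl⟩ := exists_isForest_comp_perm_eq f
    refine ⟨⟨S, h, σ⟩, ?_, rfl⟩
    simp only [coe_sigma, Set.mem_sigma_iff, mem_coe, mem_filter, mem_forests]
    exact ⟨mem_univ S, hh, hσ, (mem_filter_univ _).1 hf⟩

end Decomposition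

section Cycle

open Equiv (Perm swap)

variable {V : Type*} {σ τ : Perm V} {u v : V}

lemma sameCycle_map_of_forall {W : Type*} {τ : Perm W} {φ : V → W}
    (hφ : ∀ w, τ.SameCycle (φ w) (φ (σ w))) (huv : σ.SameCycle u v) :
    τ.SameCycle (φ u) (φ v) := by
  have hpow (k : ℕ) (w : V) : τ.SameCycle (φ w) (φ ((σ ^ k) w)) := by
    induction k with
    | zero => exact .refl _ _
    | succ k ih => simpa only [pow_succ', Perm.mul_apply] using ih.trans (hφ _)
  obtain ⟨i, rfl⟩ := huv
  obtain ⟨k, rfl | rfl⟩ := i.eq_nat_or_neg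
  · exact hpow k u
  · simpa using (hpow k ((σ ^ (-k : ℤ)) u)).symm

section Swap

variable [DecidableEq V] {B : Finset V} {y z : V}

lemma mem_permsOfFinset_erase :
    σ ∈ permsOfFinset (B.erase y) ↔ σ ∈ permsOfFinset B ∧ σ y = y := by
  simp only [mem_perms_of_finset_iff, mem_erase]
  refine ⟨fun h => ⟨fun hx => (h hx).2, by_contra fun hy => (h hy).1 rfl⟩, ?_⟩
  rintro ⟨h, hy⟩ x hx
  exact ⟨fun hxy => hx (hxy ▸ hy), h hx⟩

lemma mul_swap_mem_permsOfFinset (hσ : σ ∈ permsOfFinset B) (hz : z ∈ B) (hy : y ∈ B) :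
    σ * swap z y ∈ permsOfFinset B := by
  refine mem_perms_of_finset_iff.2 fun {x} hx => by_contra fun hxB => hx ?_
  rw [Perm.mul_apply, Equiv.swap_apply_of_ne_of_ne (ne_of_mem_of_not_mem hz hxB).symm
    (ne_of_mem_of_not_mem hy hxB).symm, apply_eq_self_of_mem_permsOfFinset hσ hxB]

lemma mem_iff_of_sameCycle (hσ : σ ∈ permsOfFinset B) (huv : σ.SameCycle u v) :
    u ∈ B ↔ v ∈ B :=
  (Perm.sameCycle_one.1 <| sameCycle_map_of_forall (τ := 1) (φ := (· ∈ B))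
    (fun _ => Perm.sameCycle_one.2 (propext (apply_mem_iff_of_mem_permsOfFinset hσ).symm))
    huv).to_iff

-- Multiplying by `swap z y` inserts the fixed point `y` right after `z` in the cycle of `z`.
lemma sameCycle_mul_swap_iff (hy : τ y = y) (hzy : z ≠ y) :
    (τ * swap z y).SameCycle u v ↔ τ.SameCycle (update id y z u) (update id y z v) := by
  set σ := τ * swap z y with hσ
  have hσz : σ z = y := by rw [hσ, Perm.mul_apply, Equiv.swap_apply_left, hy]
  have hσy : σ y = τ z := by rw [hσ, Perm.mul_apply, Equiv.swap_apply_right]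
  have hσw {w : V} (hwz : w ≠ z) (hwy : w ≠ y) : σ w = τ w := by
    rw [hσ, Perm.mul_apply, Equiv.swap_apply_of_ne_of_ne hwz hwy]
  have hφ {w : V} (hwy : w ≠ y) : update id y z w = w := update_of_ne hwy ..
  have hτ {w : V} (hwy : w ≠ y) : τ w ≠ y := fun h => hwy (τ.injective (h.trans hy.symm))
  have hσ_collapse (w : V) : σ.SameCycle w (update id y z w) := by
    obtain rfl | hwy := eq_or_ne w y
    · rw [Function.update_self, ← hσz, Perm.sameCycle_apply_left]
    · rw [hφ hwy]
  refine ⟨sameCycle_map_of_forall fun w => ?_, fun h =>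
    (hσ_collapse u).trans (.trans (sameCycle_map_of_forall (φ := id) (fun w => ?_) h)
      (hσ_collapse v).symm)⟩
  · obtain rfl | hwy := eq_or_ne w y
    · rw [Function.update_self, hσy, hφ (hτ hzy), Perm.sameCycle_apply_right]
    obtain rfl | hwz := eq_or_ne w z
    · rw [hσz, Function.update_self, hφ hzy]
    · rw [hσw hwz hwy, hφ hwy, hφ (hτ hwy), Perm.sameCycle_apply_right]
  · rw [id, id]
    obtain rfl | hwy := eq_or_ne w y
    · rw [hy]
    obtain rfl | hwz := eq_or_ne w z
    · rw [← hσy, ← hσz, Perm.sameCycle_apply_right, Perm.sameCycle_apply_right]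
    · rw [← hσw hwz hwy, Perm.sameCycle_apply_right]

-- A permutation `σ` of `B` is determined by `y = σ z` and by `σ` with `y` removed from its cycle.
lemma card_filter_permsOfFinset (hz : z ∈ B) (P : Perm V → Prop) [DecidablePred P] :
    #{σ ∈ permsOfFinset B | P σ} =
      ∑ y ∈ B, #{τ ∈ permsOfFinset (B.erase y) | P (τ * swap z y)} := by
  rw [← card_sigma]
  refine card_nbij' (fun σ => ⟨σ z, σ * swap z (σ z)⟩) (fun p => p.2 * swap z p.1) ?_ ?_ ?_ ?_
  · intro σ hσ
    obtain ⟨hσ, hP⟩ := mem_filter.1 hσ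
    have hσz : σ z ∈ B := (apply_mem_iff_of_mem_permsOfFinset hσ).2 hz
    refine mem_sigma.2 ⟨hσz, mem_filter.2 ⟨mem_permsOfFinset_erase.2
      ⟨mul_swap_mem_permsOfFinset hσ hz hσz, ?_⟩, ?_⟩⟩
    · rw [Perm.mul_apply, Equiv.swap_apply_right]
    · rwa [Equiv.mul_swap_mul_self]
  · rintro ⟨y, τ⟩ hp
    obtain ⟨hy, hτ⟩ := mem_sigma.1 hp
    obtain ⟨hτ, hP⟩ := mem_filter.1 hτ
    exact mem_filter.2 ⟨mul_swap_mem_permsOfFinset (mem_permsOfFinset_erase.1 hτ).1 hz hy, hP⟩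
  · intro σ _
    exact Equiv.mul_swap_mul_self ..
  · rintro ⟨y, τ⟩ hp
    have hτ := (mem_filter.1 (mem_sigma.1 hp).2).1
    have hy : (τ * swap z y) z = y := by
      rw [Perm.mul_apply, Equiv.swap_apply_left, (mem_permsOfFinset_erase.1 hτ).2]
    simp only [hy, Equiv.mul_swap_mul_self]

end Swap

variable [Fintype V]

/-- The cycle of `σ` through `v`, as a set of points; it is `{v}` if `v` is fixed by `σ`. -/
noncomputable def cycle (σ : Perm V) (v : V) : Finset V :=
  univ.filter (σ.SameCycle v)

lemma mem_cycle : u ∈ cycle σ v ↔ σ.SameCycle v u := by simp only [cycle, mem_filter_univ]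

lemma self_mem_cycle (σ : Perm V) (v : V) : v ∈ cycle σ v := mem_cycle.2 (.refl σ v)

lemma isCycleOn_cycle (σ : Perm V) (v : V) : σ.IsCycleOn (cycle σ v) := by
  refine ⟨Equiv.bijOn σ fun x => ?_, fun x hx y hy => ?_⟩
  · simp only [mem_coe, mem_cycle, Perm.sameCycle_apply_right]
  · exact (mem_cycle.1 hx).symm.trans (mem_cycle.1 hy)

lemma cycle_eq_singleton (hv : σ v = v) : cycle σ v = {v} := by
  ext u
  rw [mem_cycle, mem_singleton]
  exact ⟨fun h => (h.eq_of_left hv).symm, fun h => h ▸ .refl σ v⟩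

lemma cycle_mul_swap [DecidableEq V] {y z : V} (hy : τ y = y) (hzy : z ≠ y) :
    cycle (τ * swap z y) z = insert y (cycle τ z) := by
  ext v
  rw [mem_insert, mem_cycle, mem_cycle, sameCycle_mul_swap_iff hy hzy, update_of_ne hzy]
  obtain rfl | hvy := eq_or_ne v y
  · simp only [Function.update_self, id, Perm.SameCycle.rfl, true_or]
  · simp only [update_of_ne hvy, hvy, id, false_or]

end Cycle

section SuffixSums

/-- The product of the sums of the nonempty suffixes of `L`: the denominator
`∏ k, (ω_k + ⋯ + ω_p)`, here including the factor for `k = 1`. -/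
def suffixSumProd (L : List ℕ) : ℕ :=
  ∏ k ∈ range L.length, (L.drop k).sum

lemma suffixSumProd_nil : suffixSumProd [] = 1 := rfl

lemma suffixSumProd_cons (w : ℕ) (L : List ℕ) :
    suffixSumProd (w :: L) = (w + L.sum) * suffixSumProd L := by
  rw [suffixSumProd, List.length_cons, prod_range_succ', mul_comm]
  rfl

lemma suffixSumProd_map_range (ω : ℕ → ℕ) (p : ℕ) :
    suffixSumProd ((List.range p).map ω) = ∏ k ∈ range p, ∑ j ∈ Ico k p, ω j := by
  rw [suffixSumProd, List.length_map, List.length_range]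
  refine prod_congr rfl fun k _ => ?_
  rw [← List.map_drop, List.range_eq_range', List.drop_range', zero_add, mul_one]
  rfl

end SuffixSums

section CyclePattern

open Equiv (Perm swap)

variable {X V : Type*} [LinearOrder X] {ρ : X → V} {B : Finset V}

lemma exists_least_preimage [Finite X] (hρ : (B : Set V) ⊆ Set.range ρ) (hB : B.Nonempty) :
    ∃ x₀, ρ x₀ ∈ B ∧ ∀ x, ρ x ∈ B → x₀ ≤ x := by
  obtain ⟨v, hv⟩ := hB
  obtain ⟨x, rfl⟩ := hρ hv
  exact Set.exists_min_image {x | ρ x ∈ B} id (Set.toFinite _) ⟨x, hv⟩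

variable [Fintype X] [Fintype V] [DecidableEq V] {σ τ : Perm V} {x₀ : X} {y : V}

/-- For a permutation `σ` of `B`, the least points in `X` above the cycles of `σ` in `B`. -/
noncomputable def cycleMins (ρ : X → V) (σ : Perm V) (B : Finset V) : Finset X :=
  {x | ρ x ∈ B ∧ ∀ x', σ.SameCycle (ρ x) (ρ x') → x ≤ x'}

/-- The lengths of the cycles in `B` of a permutation `σ` of `B`, the cycles being ordered by the
least point of `X` above them. -/
noncomputable def cyclePattern (ρ : X → V) (σ : Perm V) (B : Finset V) : List ℕ :=
  ((cycleMins ρ σ B).sort (· ≤ ·)).map fun x => #(cycle σ (ρ x))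

lemma mem_cycleMins {x : X} :
    x ∈ cycleMins ρ σ B ↔ ρ x ∈ B ∧ ∀ x', σ.SameCycle (ρ x) (ρ x') → x ≤ x' := by
  simp only [cycleMins, mem_filter_univ]

lemma cyclePattern_empty : cyclePattern ρ σ ∅ = [] := by
  simp [cyclePattern, cycleMins]

lemma cyclePattern_congr (h : ∀ u ∈ B, ∀ v, σ.SameCycle u v ↔ τ.SameCycle u v) :
    cyclePattern ρ σ B = cyclePattern ρ τ B := by
  have hmins : cycleMins ρ σ B = cycleMins ρ τ B := by
    ext x
    simp only [mem_cycleMins]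
    exact and_congr_right fun hx => forall_congr' fun x' => by rw [h _ hx]
  rw [cyclePattern, cyclePattern, hmins]
  refine List.map_congr_left fun x hx => congrArg card ?_
  ext v
  rw [mem_cycle, mem_cycle, h _ (mem_cycleMins.1 ((mem_sort _).1 hx)).1]

lemma cyclePattern_eq_cons (hσ : σ ∈ permsOfFinset B) (hx₀ : ρ x₀ ∈ B)
    (hmin : ∀ x, ρ x ∈ B → x₀ ≤ x) :
    cyclePattern ρ σ B =
      #(cycle σ (ρ x₀)) :: cyclePattern ρ σ (B \ cycle σ (ρ x₀)) := by
  have hmins : cycleMins ρ σ B = insert x₀ (cycleMins ρ σ (B \ cycle σ (ρ x₀))) := by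
    ext x
    simp only [mem_insert, mem_cycleMins, mem_sdiff, mem_cycle]
    constructor
    · rintro ⟨hx, hxmin⟩
      by_cases hsame : σ.SameCycle (ρ x₀) (ρ x)
      · exact .inl (le_antisymm (hxmin x₀ hsame.symm) (hmin x hx))
      · exact .inr ⟨⟨hx, hsame⟩, hxmin⟩
    · rintro (rfl | ⟨⟨hx, -⟩, hxmin⟩)
      · exact ⟨hx₀, fun x' hx' => hmin x' ((mem_iff_of_sameCycle hσ hx').1 hx₀)⟩
      · exact ⟨hx, hxmin⟩
  have hlt : ∀ x ∈ cycleMins ρ σ (B \ cycle σ (ρ x₀)), x₀ ≤ x := fun x hx =>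
    hmin x (mem_sdiff.1 (mem_cycleMins.1 hx).1).1
  have hnot : x₀ ∉ cycleMins ρ σ (B \ cycle σ (ρ x₀)) := fun h =>
    (mem_sdiff.1 (mem_cycleMins.1 h).1).2 (self_mem_cycle σ _)
  rw [cyclePattern, hmins, sort_insert _ hlt hnot, List.map_cons, cyclePattern]

lemma cyclePattern_of_apply_eq_self (hσ : σ ∈ permsOfFinset (B.erase (ρ x₀))) (hx₀ : ρ x₀ ∈ B)
    (hmin : ∀ x, ρ x ∈ B → x₀ ≤ x) :
    cyclePattern ρ σ B = 1 :: cyclePattern ρ σ (B.erase (ρ x₀)) := by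
  obtain ⟨hσ, hfix⟩ := mem_permsOfFinset_erase.1 hσ
  rw [cyclePattern_eq_cons hσ hx₀ hmin, cycle_eq_singleton hfix, card_singleton,
    sdiff_singleton_eq_erase]

lemma cyclePattern_mul_swap (hτ : τ ∈ permsOfFinset (B.erase y)) (hx₀ : ρ x₀ ∈ B.erase y)
    (hy : y ∈ B) (hmin : ∀ x, ρ x ∈ B → x₀ ≤ x) :
    cyclePattern ρ (τ * swap (ρ x₀) y) B =
      (cyclePattern ρ τ (B.erase y)).modifyHead (· + 1) := by
  obtain ⟨hzy, hz⟩ := mem_erase.1 hx₀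
  obtain ⟨hτB, hτy⟩ := mem_permsOfFinset_erase.1 hτ
  have hy_notMem : y ∉ cycle τ (ρ x₀) := fun h => hzy ((mem_cycle.1 h).eq_of_right hτy)
  have hrest : B \ insert y (cycle τ (ρ x₀)) = B.erase y \ cycle τ (ρ x₀) := by
    rw [← sdiff_singleton_eq_erase, sdiff_sdiff_left, insert_eq, sup_eq_union]
  rw [cyclePattern_eq_cons (mul_swap_mem_permsOfFinset hτB hz hy) hz hmin,
    cyclePattern_eq_cons hτ hx₀ fun x hx => hmin x (mem_of_mem_erase hx),
    cycle_mul_swap hτy hzy, card_insert_of_notMem hy_notMem, hrest, List.modifyHead_cons]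
  refine congrArg _ (cyclePattern_congr fun u hu v => ?_)
  obtain ⟨hu, hu_cycle⟩ := mem_sdiff.1 hu
  have huy : u ≠ y := ne_of_mem_erase hu
  rw [sameCycle_mul_swap_iff hτy hzy, update_of_ne huy]
  obtain rfl | hvy := eq_or_ne v y
  · rw [Function.update_self, id]
    exact iff_of_false (fun h => hu_cycle (mem_cycle.2 h.symm)) fun h => huy (h.eq_of_right hτy)
  · rw [update_of_ne hvy, id, id]

lemma zero_notMem_cyclePattern : 0 ∉ cyclePattern ρ σ B := by
  rw [cyclePattern, List.mem_map]
  rintro ⟨x, -, hx⟩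
  exact (card_pos.2 ⟨_, self_mem_cycle σ (ρ x)⟩).ne' hx

/-- The permutations of `B` with cycle pattern `L`. -/
noncomputable def permsWithPattern (ρ : X → V) (B : Finset V) (L : List ℕ) : Finset (Perm V) :=
  {σ ∈ permsOfFinset B | cyclePattern ρ σ B = L}

lemma permsWithPattern_nil (hx₀ : ρ x₀ ∈ B) (hmin : ∀ x, ρ x ∈ B → x₀ ≤ x) :
    permsWithPattern ρ B [] = ∅ :=
  filter_eq_empty_iff.2 fun σ hσ => by
    rw [cyclePattern_eq_cons hσ hx₀ hmin]
    exact List.cons_ne_nil _ _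

lemma card_permsWithPattern_cons (hx₀ : ρ x₀ ∈ B) (hmin : ∀ x, ρ x ∈ B → x₀ ≤ x) (L : List ℕ) :
    #(permsWithPattern ρ B L) =
      #{σ ∈ permsOfFinset (B.erase (ρ x₀)) | 1 :: cyclePattern ρ σ (B.erase (ρ x₀)) = L} +
      ∑ y ∈ B.erase (ρ x₀),
        #{τ ∈ permsOfFinset (B.erase y) |
          (cyclePattern ρ τ (B.erase y)).modifyHead (· + 1) = L} := by
  rw [permsWithPattern, card_filter_permsOfFinset hx₀, ← add_sum_erase _ _ hx₀]
  congr 1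
  · refine congrArg card (filter_congr fun σ hσ => ?_)
    rw [Equiv.swap_self, ← Perm.one_def, mul_one,
      cyclePattern_of_apply_eq_self hσ hx₀ hmin]
  · refine sum_congr rfl fun y hy => congrArg card (filter_congr fun τ hτ => ?_)
    obtain ⟨hne, hy⟩ := mem_erase.1 hy
    rw [cyclePattern_mul_swap hτ (mem_erase.2 ⟨hne.symm, hx₀⟩) hy hmin]

lemma card_permsWithPattern_one_cons (hx₀ : ρ x₀ ∈ B) (hmin : ∀ x, ρ x ∈ B → x₀ ≤ x)
    (L : List ℕ) :
    #(permsWithPattern ρ B (1 :: L)) = #(permsWithPattern ρ (B.erase (ρ x₀)) L) := by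
  have hempty (y : V) : {τ ∈ permsOfFinset (B.erase y) |
      (cyclePattern ρ τ (B.erase y)).modifyHead (· + 1) = 1 :: L} = ∅ := by
    refine filter_eq_empty_iff.2 fun τ _ h => ?_
    cases hp : cyclePattern ρ τ (B.erase y) with
    | nil => simp [hp] at h
    | cons c T =>
      obtain rfl : c = 0 := by simp_all
      exact zero_notMem_cyclePattern (hp ▸ List.mem_cons_self)
  simp only [card_permsWithPattern_cons hx₀ hmin, hempty, card_empty, sum_const_zero, add_zero,
    List.cons.injEq, true_and]
  rfl

lemma card_permsWithPattern_add_two_cons (hx₀ : ρ x₀ ∈ B) (hmin : ∀ x, ρ x ∈ B → x₀ ≤ x)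
    (w : ℕ) (L : List ℕ) :
    #(permsWithPattern ρ B ((w + 2) :: L)) =
      ∑ y ∈ B.erase (ρ x₀), #(permsWithPattern ρ (B.erase y) ((w + 1) :: L)) := by
  have hhead (T : List ℕ) : T.modifyHead (· + 1) = (w + 2) :: L ↔ T = (w + 1) :: L := by
    cases T <;> simp
  have hempty (σ : Perm V) : ¬ 1 :: cyclePattern ρ σ (B.erase (ρ x₀)) = (w + 2) :: L := by simp
  simp only [card_permsWithPattern_cons hx₀ hmin, hempty, hhead, filter_false, card_empty,
    zero_add]
  rfl

lemma card_permsWithPattern_empty_mul {L : List ℕ} (hL : ∀ w ∈ L, 0 < w) :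
    #(permsWithPattern ρ ∅ L) * suffixSumProd L = if L.sum = 0 then 1 else 0 := by
  cases L with
  | nil =>
    simp only [permsWithPattern, cyclePattern_empty, suffixSumProd_nil, filter_true,
      card_perms_of_finset, card_empty, Nat.factorial_zero, List.sum_nil, mul_one, if_true]
  | cons w L =>
    have hsum : (w :: L).sum ≠ 0 := ((hL w List.mem_cons_self).trans_le (by simp)).ne'
    simp only [permsWithPattern, cyclePattern_empty, reduceCtorEq, filter_false, card_empty,
      zero_mul, if_neg hsum]

theorem card_permsWithPattern_mul (hρ : (B : Set V) ⊆ Set.range ρ) {L : List ℕ}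
    (hL : ∀ w ∈ L, 0 < w) :
    #(permsWithPattern ρ B L) * suffixSumProd L = if L.sum = #B then (#B).factorial else 0 := by
  induction hn : #B generalizing B L with
  | zero => exact card_eq_zero.1 hn ▸ card_permsWithPattern_empty_mul hL
  | succ n ih =>
    obtain ⟨x₀, hx₀, hmin⟩ := exists_least_preimage hρ (card_pos.1 (by lia))
    have hcard {v : V} (hv : v ∈ B) : #(B.erase v) = n := (card_erase_of_mem hv).trans (by lia)
    have hIH {v : V} (hv : v ∈ B) {L : List ℕ} (hL : ∀ w ∈ L, 0 < w) :=
      ih ((coe_subset.2 (B.erase_subset v)).trans hρ) hL (hcard hv)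
    match L with
    | [] => simp [permsWithPattern_nil hx₀ hmin]
    | 0 :: L => exact absurd (hL 0 List.mem_cons_self) (lt_irrefl 0)
    | 1 :: L =>
      rw [card_permsWithPattern_one_cons hx₀ hmin, suffixSumProd_cons, mul_left_comm,
        hIH hx₀ (List.forall_mem_of_forall_mem_cons hL), List.sum_cons, mul_ite, mul_zero,
        Nat.factorial_succ]
      split_ifs <;> grind
    | (w + 2) :: L =>
      have hL' : ∀ v ∈ (w + 1) :: L, 0 < v := by
        simpa using List.forall_mem_of_forall_mem_cons hL
      set c := fun y => #(permsWithPattern ρ (B.erase y) ((w + 1) :: L))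
      refine Nat.eq_of_mul_eq_mul_left (show 0 < w + 1 + L.sum by lia) ?_
      calc (w + 1 + L.sum) * (#(permsWithPattern ρ B ((w + 2) :: L)) *
              suffixSumProd ((w + 2) :: L))
          = (w + 2 + L.sum) * ∑ y ∈ B.erase (ρ x₀), c y * suffixSumProd ((w + 1) :: L) := by
            rw [card_permsWithPattern_add_two_cons hx₀ hmin, ← sum_mul, suffixSumProd_cons,
              suffixSumProd_cons]
            ring
        _ = (w + 2 + L.sum) * (n * if (w + 1) + L.sum = n then n.factorial else 0) := by
            rw [sum_congr rfl fun y hy => hIH (mem_of_mem_erase hy) hL', sum_const, hcard hx₀,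
              smul_eq_mul, List.sum_cons]
        _ = (w + 1 + L.sum) * if ((w + 2) :: L).sum = n + 1 then (n + 1).factorial else 0 := by
            rw [List.sum_cons, Nat.factorial_succ]
            split_ifs <;> grind

end CyclePattern

section GlobalOrbitPattern

open Equiv (Perm)

variable {N : ℕ} {S : Finset (Fin N)} {h : Fin N → Fin N} {σ : Perm (Fin N)}

lemma IsForest.sameComp_comp_perm_iff (hh : IsForest S h) (hσ : σ ∈ permsOfFinset S)
    {x y : Fin N} : sameComp (h ∘ σ) x y ↔ σ.SameCycle (hh.root x) (hh.root y) := by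
  obtain ⟨a, ha⟩ := hh.exists_iterate_comp_perm_eq_root hσ x
  obtain ⟨b, hb⟩ := hh.exists_iterate_comp_perm_eq_root hσ y
  have hiter (z : Fin N) := hh.iterate_comp_perm hσ (hh.root_mem z)
  constructor
  · rintro ⟨k, l, hkl⟩
    have hpow : (σ ^ (b + k)) (hh.root x) = (σ ^ (a + l)) (hh.root y) := by
      rw [← hiter x, ← hiter y, ← ha, ← hb, ← iterate_add_apply,
        ← iterate_add_apply, show b + k + a = b + a + k by lia, show a + l + b = b + a + l by lia,
        iterate_add_apply, hkl, ← iterate_add_apply]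
    rw [← Perm.sameCycle_pow_left, hpow, Perm.sameCycle_pow_left]
  · intro hxy
    obtain ⟨k, hk⟩ := hxy.exists_nat_pow_eq
    exact ⟨k + a, b, by rw [iterate_add_apply, ha, hb, hiter x, hk]⟩

lemma IsForest.gopOrd_comp_perm (hh : IsForest S h) (hσ : σ ∈ permsOfFinset S) (x : Fin N) :
    gopOrd (h ∘ σ) x = #(cycle σ (hh.root x)) := by
  obtain ⟨a, ha⟩ := hh.exists_iterate_comp_perm_eq_root hσ x
  have hiter := hh.iterate_comp_perm hσ (hh.root_mem x)
  have hperiod (p : ℕ) :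
      (∃ K, (h ∘ σ)^[K + p] x = (h ∘ σ)^[K] x) ↔ #(cycle σ (hh.root x)) ∣ p := by
    rw [← (isCycleOn_cycle σ _).pow_apply_eq (self_mem_cycle σ _)]
    constructor
    · rintro ⟨K, hK⟩
      refine (σ ^ K).injective ?_
      rw [← Perm.mul_apply, ← pow_add, ← hiter, ← hiter, ← ha, ← iterate_add_apply,
        ← iterate_add_apply, add_comm, iterate_add_apply, hK, ← iterate_add_apply, add_comm]
    · intro hp
      exact ⟨a, by rw [add_comm, iterate_add_apply, ha, hiter, hp]⟩
  have hleast : IsLeast {p | 0 < p ∧ #(cycle σ (hh.root x)) ∣ p} #(cycle σ (hh.root x)) :=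
    ⟨⟨card_pos.2 ⟨_, self_mem_cycle σ _⟩, dvd_rfl⟩, fun p hp => Nat.le_of_dvd hp.1 hp.2⟩
  simp only [gopOrd, hperiod, hleast.csInf_eq]

lemma IsForest.gop_comp_perm (hh : IsForest S h) (hσ : σ ∈ permsOfFinset S) :
    gop (h ∘ σ) = cyclePattern hh.root σ S := by
  simp only [gop, cyclePattern, cycleMins, hh.sameComp_comp_perm_iff hσ, hh.root_mem, true_and,
    funext (hh.gopOrd_comp_perm hσ)]

theorem card_gop_mul_suffixSumProd {L : List ℕ} (hL : ∀ w ∈ L, 0 < w) :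
    #{f : Fin N → Fin N | gop f = L} * suffixSumProd L * N =
      N.descFactorial L.sum * (L.sum * N ^ (N - L.sum)) := by
  have hforest (S : Finset (Fin N)) {h : Fin N → Fin N} (hh : h ∈ forests S) :
      #((permsOfFinset S).filter fun σ : Perm (Fin N) => gop (h ∘ σ) = L) * suffixSumProd L =
        if L.sum = #S then (#S).factorial else 0 := by
    have hh := mem_forests.1 hh
    rw [← card_permsWithPattern_mul (fun v hv => ⟨v, hh.root_eq_self hv⟩) hL, permsWithPattern,
      filter_congr fun σ hσ => by rw [hh.gop_comp_perm hσ]]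
  calc #{f : Fin N → Fin N | gop f = L} * suffixSumProd L * N
      = ∑ S : Finset (Fin N),
          #(forests S) * (if L.sum = #S then (#S).factorial else 0) * N := by
        rw [card_filter_eq_sum_forests, sum_mul, sum_mul]
        refine sum_congr rfl fun S _ => ?_
        rw [sum_mul, sum_congr rfl fun h hh => hforest S hh, sum_const, smul_eq_mul]
    _ = ∑ S : Finset (Fin N) with #S = L.sum, L.sum.factorial * (L.sum * N ^ (N - L.sum)) := by
        rw [sum_filter]
        refine sum_congr rfl fun S _ => ?_
        split_ifs with h₁ h₂ h₂
        · have hCayley := card_forests_mul_card S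
          rw [Fintype.card_fin, card_compl, Fintype.card_fin, ← h₁] at hCayley
          rw [mul_right_comm, hCayley, h₁, mul_comm]
        · lia
        · lia
        · ring
    _ = N.descFactorial L.sum * (L.sum * N ^ (N - L.sum)) := by
        rw [sum_const, univ_filter_card_eq, card_powersetCard, card_univ, Fintype.card_fin,
          smul_eq_mul, Nat.descFactorial_eq_factorial_mul_choose]
        ring

end GlobalOrbitPattern

theorem card_gop_general_general (N p : ℕ) (hp : 0 < p) (ω : ℕ → ℕ)
    (hpos : ∀ i < p, 0 < ω i) (hs : ∑ i ∈ Finset.range p, ω i ≤ N) :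
    Nat.card {f : Fin N → Fin N // gop f = (List.range p).map ω} *
        ((N - ∑ i ∈ Finset.range p, ω i).factorial *
          ∏ k ∈ Finset.Ico 1 p, ∑ j ∈ Finset.Ico k p, ω j)
      = (N - 1).factorial * N ^ (N - ∑ i ∈ Finset.range p, ω i) := by
  have hcount := card_gop_mul_suffixSumProd (N := N) (L := (List.range p).map ω)
    (by simpa only [List.forall_mem_map, List.mem_range] using hpos)
  have hsum : ((List.range p).map ω).sum = ∑ i ∈ range p, ω i := rfl
  rw [← Fintype.card_subtype, ← Nat.card_eq_fintype_card, suffixSumProd_map_range, range_eq_Ico,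
    prod_eq_prod_Ico_succ_bot hp, ← range_eq_Ico, zero_add, hsum] at hcount
  have hspos : 0 < ∑ i ∈ range p, ω i :=
    sum_pos (fun i hi => hpos i (mem_range.1 hi)) ⟨0, mem_range.2 hp⟩
  generalize Nat.card {f : Fin N → Fin N // gop f = (List.range p).map ω} = c at *
  generalize ∑ i ∈ range p, ω i = s at *
  generalize ∏ k ∈ Ico 1 p, ∑ j ∈ Ico k p, ω j = Q at *
  refine Nat.eq_of_mul_eq_mul_right (Nat.mul_pos hspos (hspos.trans_le hs)) ?_
  calc c * ((N - s).factorial * Q) * (s * N)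
      = (N - s).factorial * (c * (s * Q) * N) := by ring
    _ = (N - s).factorial * N.descFactorial s * s * N ^ (N - s) := by rw [hcount]; ring
    _ = N * (N - 1).factorial * s * N ^ (N - s) := by
      rw [Nat.factorial_mul_descFactorial hs, Nat.mul_factorial_pred (by lia)]
    _ = (N - 1).factorial * N ^ (N - s) * (s * N) := by ring

/-- for `p ≥ 2` and positive integers `ω_1, …, ω_p` (here `ω 0, …, ω (p-1)`)
with `s = ω_1 + ⋯ + ω_p ≤ N`, the number of `f ∈ F_N` whose global orbit pattern is
`[ω_1, …, ω_p]` equals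
`(N−1)! · N^{N−s} / ((N−s)! · Π_{k=2}^{p} (ω_k + ⋯ + ω_p))`
(stated here in multiplied-out form, the division being exact). -/
theorem card_gop_general (N p : ℕ) (hp : 2 ≤ p) (ω : ℕ → ℕ)
    (hpos : ∀ i < p, 0 < ω i) (hs : ∑ i ∈ Finset.range p, ω i ≤ N) :
    Nat.card {f : Fin N → Fin N // gop f = (List.range p).map ω} *
        ((N - ∑ i ∈ Finset.range p, ω i).factorial *
          ∏ k ∈ Finset.Ico 1 p, ∑ j ∈ Finset.Ico k p, ω j)
      = (N - 1).factorial * N ^ (N - ∑ i ∈ Finset.range p, ω i) :=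
  card_gop_general_general N p (by lia) ω hpos hs
end

section
/- If f : X_N → X_N satisfies |f(p) − f(p+1)| ≤ 1 for all integers p with 0 ≤ p ≤ N−2, then every periodic point of f has period 1 or 2; equivalently, f(f(x)) = x for every periodic point x of f, and f has no periodic orbit of length 3 or more. -/
/-!
A map whose steps have size at most one does not increase distances, so it preserves the distance
between any two of its periodic points. Let `y` be the point of a periodic orbit that is sent to
the largest point `f y` of that orbit. Then `y` and `f (f y)` both lie below `f y`, at the same
distance from it, so they coincide: the orbit has at most two points.
-/

open Function

section PeriodicPoints

variable {α β G : Type*} {f : α → α} {x y : α}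

lemma map_apply_eq_of_mem_periodicPts [PartialOrder β] {φ : α → β} (hφ : ∀ z, φ (f z) ≤ φ z)
    (hx : x ∈ periodicPts f) : φ (f x) = φ x := by
  obtain ⟨q, hq, hqx⟩ := hx
  have hanti : Antitone fun n ↦ φ (f^[n] x) := antitone_nat_of_succ_le fun n ↦ by
    simpa only [iterate_succ_apply'] using hφ (f^[n] x)
  refine (hφ x).antisymm ?_
  calc φ x = φ (f^[q] x) := by rw [hqx.eq]
    _ ≤ φ (f x) := hanti (Nat.one_le_of_lt hq)

lemma map_apply_apply_eq_of_mem_periodicPts [PartialOrder β] {d : α → α → β}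
    (hd : ∀ z w, d (f z) (f w) ≤ d z w) (hx : x ∈ periodicPts f) (hy : y ∈ periodicPts f) :
    d (f x) (f y) = d x y := by
  obtain ⟨p, hp, hpx⟩ := hx
  obtain ⟨q, hq, hqy⟩ := hy
  have hxy : (x, y) ∈ periodicPts (Prod.map f f) :=
    mk_mem_periodicPts (Nat.mul_pos hp hq)
      ((isPeriodicPt_prodMap (x, y)).2 ⟨hpx.mul_const q, hqy.const_mul p⟩)
  exact map_apply_eq_of_mem_periodicPts (φ := fun z ↦ d z.1 z.2)
    (fun z ↦ hd z.1 z.2) hxy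

lemma exists_forall_iterate_le_of_mem_periodicPts [LinearOrder β] (φ : α → β)
    (hx : x ∈ periodicPts f) : ∃ k, ∀ m, φ (f^[m] x) ≤ φ (f (f^[k] x)) := by
  obtain ⟨q, hq, hqx⟩ := hx
  obtain ⟨k, -, hk⟩ :=
    (Finset.range q).exists_max_image (fun n ↦ φ (f^[n] x)) ⟨0, Finset.mem_range.2 hq⟩
  have hpred : f (f^[k + (q - 1)] x) = f^[k] x := by
    rw [← iterate_succ_apply' f, Nat.succ_eq_add_one, add_assoc, Nat.sub_add_cancel hq,
      iterate_add_apply, hqx.eq]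
  refine ⟨k + (q - 1), fun m ↦ ?_⟩
  rw [hpred, ← hqx.iterate_mod_apply m]
  exact hk _ (Finset.mem_range.2 (Nat.mod_lt m hq))

variable [AddCommGroup G] [LinearOrder G] [IsOrderedAddMonoid G]

theorem periodic_points_of_slope_le_one_general {e : α → G} (he : Injective e)
    (hf : ∀ z w, |e (f z) - e (f w)| ≤ |e z - e w|) (hx : x ∈ periodicPts f) :
    f (f x) = x := by
  obtain ⟨k, hmax⟩ := exists_forall_iterate_le_of_mem_periodicPts e hx
  set y := f^[k] x with hy
  have hy_mem : y ∈ periodicPts f := (bijOn_periodicPts f).mapsTo.iterate k hx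
  have hfy_mem : f y ∈ periodicPts f := (bijOn_periodicPts f).mapsTo hy_mem
  have hy_le : e y ≤ e (f y) := hmax k
  have hffy_le : e (f (f y)) ≤ e (f y) := by
    simpa only [iterate_succ_apply', ← hy] using hmax (k + 2)
  have hdist : |e (f (f y)) - e (f y)| = |e (f y) - e y| :=
    map_apply_apply_eq_of_mem_periodicPts (d := fun z w ↦ |e z - e w|) hf hfy_mem hy_mem
  have hperiod_y : IsPeriodicPt f 2 y := he <| by
    rw [abs_sub_comm, abs_of_nonneg (sub_nonneg.2 hffy_le), abs_of_nonneg (sub_nonneg.2 hy_le)]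
      at hdist
    exact sub_right_injective hdist
  have hperiod_x : IsPeriodicPt f 2 x := by
    rw [isPeriodicPt_iff_minimalPeriod_dvd] at hperiod_y ⊢
    rwa [hy, minimalPeriod_apply_iterate hx] at hperiod_y
  exact hperiod_x

end PeriodicPoints

lemma abs_sub_le_mul_of_abs_sub_succ_le {R : Type*} [CommRing R] [LinearOrder R]
    [IsStrictOrderedRing R] {N : ℕ} {g : Fin N → R} {K : R}
    (hg : ∀ p : ℕ, ∀ hp : p + 1 < N, |g ⟨p, Nat.lt_of_succ_lt hp⟩ - g ⟨p + 1, hp⟩| ≤ K)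
    (u v : Fin N) : |g u - g v| ≤ K * |((u : ℕ) : R) - ((v : ℕ) : R)| := by
  obtain _ | n := N
  · exact u.elim0
  have hstep (i : Fin n) : |g i.castSucc - g i.succ| ≤ K := hg i (Nat.succ_lt_succ i.isLt)
  have hadd : Monotone fun i : Fin (n + 1) ↦ K * ((i : ℕ) : R) + g i :=
    Fin.monotone_iff_le_succ.2 fun i ↦ by
      simp only [Fin.val_castSucc, Fin.val_succ, Nat.cast_add, Nat.cast_one]
      linarith [(abs_le.1 (hstep i)).2]
  have hsub : Monotone fun i : Fin (n + 1) ↦ K * ((i : ℕ) : R) - g i :=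
    Fin.monotone_iff_le_succ.2 fun i ↦ by
      simp only [Fin.val_castSucc, Fin.val_succ, Nat.cast_add, Nat.cast_one]
      linarith [(abs_le.1 (hstep i)).1]
  wlog huv : v ≤ u generalizing u v
  · simpa only [abs_sub_comm] using this v u (le_of_not_ge huv)
  have hcast : ((v : ℕ) : R) ≤ ((u : ℕ) : R) := Nat.cast_le.2 huv
  rw [abs_of_nonneg (sub_nonneg.2 hcast), abs_le]
  constructor <;> linarith [hadd huv, hsub huv]

/-- if `f : X_N → X_N` satisfies `|f(p) − f(p+1)| ≤ 1` for all
`0 ≤ p ≤ N−2`, then every periodic point of `f` has period `1` or `2`: for every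
periodic point `x` we have `f(f(x)) = x` (so there is no periodic orbit of length
`3` or more). -/
theorem periodic_points_of_slope_le_one (N : ℕ) (f : Fin N → Fin N)
    (hf : ∀ p : ℕ, ∀ hp : p + 1 < N,
      |((f ⟨p, Nat.lt_of_succ_lt hp⟩ : ℕ) : ℤ) - ((f ⟨p + 1, hp⟩ : ℕ) : ℤ)| ≤ 1) :
    ∀ x : Fin N, (∃ q : ℕ, 0 < q ∧ f^[q] x = x) → f (f x) = x := by
  have hlip (u v : Fin N) : |((f u : ℕ) : ℤ) - (f v : ℕ)| ≤ |((u : ℕ) : ℤ) - (v : ℕ)| := by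
    simpa only [one_mul] using
      abs_sub_le_mul_of_abs_sub_succ_le (g := fun i ↦ ((f i : ℕ) : ℤ)) hf u v
  exact fun x ↦ periodic_points_of_slope_le_one_general
    (Nat.cast_injective.comp Fin.val_injective) hlip
end
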